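/- arXiv:2501.00766 — 6 statements merged into one kernel-verified Lean document; each statement's English description precedes it below -/
import Mathlib

section
/- Let Σ be a first-order signature, let ⟨A_i⟩_{i∈I} be a family of Σ-structures, let 𝓕 be a filter over I, and let ∏_𝓕 A_i denote the reduced product of ⟨A_i⟩_{i∈I} modulo 𝓕. Then for every basic Horn formula φ(x_1,…,x_n) and all elements ā_1,…,ā_n of the product ∏_{i∈I} A_i, if the set {i ∈ I : A_i ⊨ φ[π_i(ā_1),…,π_i(ā_n)]} belongs to 𝓕, then the reduced product ∏_𝓕 A_i satisfies φ at the equivalence classes ā_1/𝓕,…,ā_n/𝓕. -/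
/-!
Common definitions: products, reduced products, basic Horn formulas,
bundled structures, diagrams, units.
-/

namespace ZFHorn

open FirstOrder Language Structure Filter Set

universe u v w u' v' w'

variable {L : FirstOrder.Language.{v, w}}

/-- The direct product structure on a dependent function type. -/
instance piStructure {ι : Type*} (M : ι → Type*) [∀ i, L.Structure (M i)] :
    L.Structure (∀ i, M i) where
  funMap f x i := funMap f fun k => x k i
  RelMap r x := ∀ i, RelMap r fun k => x k i

/-- The reduced-product prestructure on `∀ i, M i` modulo a filter `F`:
functions act coordinatewise, and a relation holds precisely when it holds on a
set of coordinates belonging to `F`. -/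
instance reducedProductPrestructure {ι : Type*} (F : Filter ι) (M : ι → Type*)
    [∀ i, L.Structure (M i)] : L.Prestructure (F.productSetoid M) :=
  { toStructure :=
      { funMap := fun {_} f x i => funMap f fun k => x k i
        RelMap := fun {_} r x => ∀ᶠ i in F, RelMap r fun k => x k i }
    fun_equiv := fun {n} f x y xy => by
      refine mem_of_superset (iInter_mem.2 xy) fun i hi => ?_
      simp only [Set.mem_iInter, Set.mem_setOf_eq] at hi
      simp only [Set.mem_setOf_eq, hi]
    rel_equiv := fun {n} r x y xy => by
      rw [← iff_eq_eq]
      constructor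
      · intro hx
        refine mem_of_superset (inter_mem hx (iInter_mem.2 xy)) ?_
        rintro i ⟨h1, h2⟩
        simp only [Set.mem_iInter, Set.mem_setOf_eq] at *
        rw [← funext h2]
        exact h1
      · intro hy
        refine mem_of_superset (inter_mem hy (iInter_mem.2 xy)) ?_
        rintro i ⟨h1, h2⟩
        simp only [Set.mem_iInter, Set.mem_setOf_eq] at *
        rw [funext h2]
        exact h1 }

/-- The reduced product `∏_F M i` of a family of structures modulo a filter,
as a first-order structure. -/
instance reducedProductStructure {ι : Type*} (F : Filter ι) (M : ι → Type*)
    [∀ i, L.Structure (M i)] : L.Structure (F.Product M) :=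
  Language.quotientStructure

instance productNonempty {ι : Type*} (F : Filter ι) (M : ι → Type*)
    [∀ i, Nonempty (M i)] : Nonempty (F.Product M) :=
  ⟨(↑(fun i => Classical.arbitrary (M i)) : F.Product M)⟩

section Horn

variable {α : Type u'}

/-- `orList φ [ψ₁, …, ψₖ]` is the disjunction `φ ∨ ψ₁ ∨ ⋯ ∨ ψₖ`. -/
def orList : L.Formula α → List (L.Formula α) → L.Formula α
  | φ, [] => φ
  | φ, ψ :: l => φ ⊔ orList ψ l

/-- A list of formulas is a Horn list if each member is atomic or the negation of
an atomic formula, and at most one member is atomic. -/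
def IsHornList (l : List (L.Formula α)) : Prop :=
  (∀ χ ∈ l, BoundedFormula.IsAtomic χ ∨
      ∃ θ : L.Formula α, BoundedFormula.IsAtomic θ ∧ χ = θ.not) ∧
    ∀ i j : Fin l.length,
      BoundedFormula.IsAtomic (l.get i) → BoundedFormula.IsAtomic (l.get j) → i = j

/-- A basic Horn formula is a disjunction `φ₀ ∨ ⋯ ∨ φₙ` in which at most one
disjunct is atomic, the rest being negations of atomic formulas. -/
def IsBasicHorn (φ : L.Formula α) : Prop :=
  ∃ (ψ : L.Formula α) (l : List (L.Formula α)), φ = orList ψ l ∧ IsHornList (ψ :: l)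

/-- A strict basic Horn formula (quasi-identity) is a basic Horn formula in which
at least one disjunct is atomic. -/
def IsQuasiIdentity (φ : L.Formula α) : Prop :=
  ∃ (ψ : L.Formula α) (l : List (L.Formula α)), φ = orList ψ l ∧ IsHornList (ψ :: l) ∧
    ∃ χ ∈ ψ :: l, BoundedFormula.IsAtomic χ

end Horn

/-- `SatAll M φ` means that every assignment of the free variables satisfies `φ` in `M`. -/
def SatAll (M : Type u') [L.Structure M] {α : Type v'} (φ : L.Formula α) : Prop :=
  ∀ v : α → M, φ.Realize v

/-- A unit is a one-element structure in which every relation holds. -/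
def IsUnit (L : FirstOrder.Language.{v, w}) (M : Type u') [L.Structure M] : Prop :=
  (∃ a : M, ∀ b : M, b = a) ∧
    ∀ (n : ℕ) (r : L.Relations n) (x : Fin n → M), RelMap r x

/-- A bundled nonempty `L`-structure. -/
structure SStruct (L : FirstOrder.Language.{v, w}) : Type (max (u + 1) v w) where
  /-- the underlying type -/
  carrier : Type u
  /-- the structure on the underlying type -/
  struc : L.Structure carrier
  /-- the underlying type is nonempty -/
  nonempty : Nonempty carrier

attribute [instance] SStruct.struc SStruct.nonempty

instance : CoeSort (SStruct.{u} L) (Type u) :=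
  ⟨SStruct.carrier⟩

/-- Bundle a nonempty structure. -/
def SStruct.of (M : Type u) [i : L.Structure M] [h : Nonempty M] : SStruct.{u} L :=
  ⟨M, i, h⟩

variable (L)

/-- A class of structures is closed under isomorphisms. -/
def ClosedUnderIso (K : Set (SStruct.{u} L)) : Prop :=
  ∀ M ∈ K, ∀ N : SStruct.{u} L, Nonempty ((M : Type u) ≃[L] (N : Type u)) → N ∈ K

/-- A class of structures is closed under (nonempty) substructures. -/
def ClosedUnderSubstructures (K : Set (SStruct.{u} L)) : Prop :=
  ∀ M ∈ K, ∀ (S : L.Substructure (M : Type u)) (h : Nonempty S),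
    (⟨S, inferInstance, h⟩ : SStruct.{u} L) ∈ K

/-- A class of structures is closed under reduced products (modulo proper filters). -/
def ClosedUnderReducedProducts (K : Set (SStruct.{u} L)) : Prop :=
  ∀ (ι : Type u) (F : Filter ι), F.NeBot → ∀ B : ι → SStruct.{u} L, (∀ i, B i ∈ K) →
    (⟨F.Product fun i => (B i : Type u), inferInstance, inferInstance⟩ : SStruct.{u} L) ∈ K

/-- A class of structures is closed under homomorphic images. -/
def ClosedUnderHomImages (K : Set (SStruct.{u} L)) : Prop :=
  ∀ M ∈ K, ∀ (N : SStruct.{u} L) (f : (M : Type u) →[L] (N : Type u)),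
    Function.Surjective f → N ∈ K

/-- A class of structures is closed under direct products. -/
def ClosedUnderProducts (K : Set (SStruct.{u} L)) : Prop :=
  ∀ (ι : Type u) (B : ι → SStruct.{u} L), (∀ i, B i ∈ K) →
    (⟨∀ i, (B i : Type u), inferInstance, inferInstance⟩ : SStruct.{u} L) ∈ K

/-- A class of structures is axiomatized by a set of formulas `Γ` if it consists
exactly of those structures satisfying every formula of `Γ`. -/
def AxiomatizedBy (K : Set (SStruct.{u} L)) (Γ : Set (L.Formula ℕ)) : Prop :=
  ∀ M : SStruct.{u} L, M ∈ K ↔ ∀ φ ∈ Γ, SatAll (M : Type u) φ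

/-- The positive diagram of `A`: all atomic `Σ(A)`-sentences true in `A`. -/
def DiagPlus (A : Type u') [L.Structure A] : Set ((L[[A]]).Sentence) :=
  {φ | BoundedFormula.IsAtomic φ ∧ A ⊨ φ}

/-- The negative diagram of `A`: all negated atomic `Σ(A)`-sentences true in `A`. -/
def DiagMinus (A : Type u') [L.Structure A] : Set ((L[[A]]).Sentence) :=
  {φ | ∃ ψ : (L[[A]]).Sentence, BoundedFormula.IsAtomic ψ ∧ φ = ψ.not ∧ A ⊨ φ}

/-- The diagram of `A`. -/
def Diag (A : Type u') [L.Structure A] : Set ((L[[A]]).Sentence) :=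
  DiagPlus L A ∪ DiagMinus L A


theorem aux_term {L : FirstOrder.Language.{v, w}} {ι : Type u} (F : Filter ι) (M : ι → Type w')
    [∀ i, L.Structure (M i)] {β : Type u'} (x : β → ∀ i, M i) (t : L.Term β) :
    (t.realize fun k => (x k : F.Product M)) =
      ((fun i => t.realize fun k => x k i : ∀ i, M i) : F.Product M) := by
  induction t with
  | var => rfl
  | func f ts ih =>
    simp only [Term.realize, ih]
    exact @funMap_quotient_mk' L _ (F.productSetoid M) (reducedProductPrestructure F M) _ f
      (fun j i => (ts j).realize fun k => x k i)

theorem aux_atomic {L : FirstOrder.Language.{v, w}} {ι : Type u} (F : Filter ι) (M : ι → Type w')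
    [∀ i, L.Structure (M i)] {β : Type u'} (x : β → ∀ i, M i) (φ : L.Formula β)
    (hφ : BoundedFormula.IsAtomic φ) :
    (φ.Realize fun k => (x k : F.Product M)) ↔ ∀ᶠ i in F, φ.Realize fun k => x k i := by
  let y : β ⊕ Fin 0 → ∀ i, M i := Sum.elim x (fun j => j.elim0)
  have e1 : (Sum.elim (fun k => (x k : F.Product M)) default : β ⊕ Fin 0 → F.Product M)
      = fun k => (y k : F.Product M) := by
    funext k
    rcases k with k | k
    · rfl
    · exact k.elim0
  have e2 : ∀ i, (Sum.elim (fun k => x k i) default : β ⊕ Fin 0 → M i) = fun k => y k i := by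
    intro i
    funext k
    rcases k with k | k
    · rfl
    · exact k.elim0
  have e3 : ∀ t : L.Term (β ⊕ Fin 0),
      t.realize (Sum.elim (fun k => (x k : F.Product M)) default : β ⊕ Fin 0 → F.Product M) =
      ((fun i => t.realize fun k => y k i : ∀ i, M i) : F.Product M) := by
    intro t
    rw [e1]
    exact aux_term F M y t
  cases hφ with
  | equal t₁ t₂ =>
    simp only [Formula.Realize, BoundedFormula.realize_bdEqual, e2]
    refine Iff.trans (iff_of_eq (congrArg₂ (· = ·) (e3 t₁) (e3 t₂))) ?_
    exact Quotient.eq''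
  | rel R ts =>
    simp only [Formula.Realize, BoundedFormula.realize_rel, e2]
    refine Iff.trans (iff_of_eq (congrArg (RelMap R) (funext fun j => e3 (ts j)))) ?_
    exact @relMap_quotient_mk' L _ (F.productSetoid M)
      (reducedProductPrestructure F M) _ R (fun j i => (ts j).realize fun k => y k i)

theorem aux_orList {L : FirstOrder.Language.{v, w}} {N : Type w'} [L.Structure N] {β : Type u'}
    (x : β → N) (l : List (L.Formula β)) : ∀ ψ : L.Formula β,
    (orList ψ l).Realize x ↔ ∃ χ ∈ ψ :: l, χ.Realize x := by
  induction l with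
  | nil => intro ψ; simp [orList]
  | cons a l ih =>
    intro ψ
    rw [orList, Formula.realize_sup, ih]
    simp

/-- Lemma 2(2): for a basic Horn formula `φ(x₁,…,xₙ)` and `ā₁,…,āₙ` in the direct product,
if `{i | Mᵢ ⊨ φ[πᵢ(ā₁),…,πᵢ(āₙ)]} ∈ F` then the reduced product `∏_F Mᵢ`
satisfies `φ` at the classes `āₖ/F`. -/
theorem realize_basicHorn_reducedProduct {L : FirstOrder.Language.{v, w}}
    {ι : Type u} (F : Filter ι) [F.NeBot] (M : ι → Type w')
    [∀ i, L.Structure (M i)] [∀ i, Nonempty (M i)] {n : ℕ}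
    (φ : L.Formula (Fin n)) (hφ : IsBasicHorn φ)
    (a : Fin n → ∀ i, M i)
    (h : {i : ι | φ.Realize fun k => a k i} ∈ F) :
    φ.Realize fun k => (↑(a k) : F.Product M) := by
  obtain ⟨ψ, l, rfl, h1, h2⟩ := hφ
  rw [aux_orList]
  by_contra hc
  push Not at hc
  have hE : ∀ᶠ i in F, ∃ χ ∈ ψ :: l, χ.Realize fun k => a k i := by
    filter_upwards [h] with i hi
    exact (aux_orList _ _ _).1 hi
  have hA : ∀ᶠ i in F, ∀ χ ∈ {χ | χ ∈ ψ :: l},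
      BoundedFormula.IsAtomic χ ∨ ¬ χ.Realize fun k => a k i := by
    refine (eventually_all_finite (List.finite_toSet (ψ :: l))).2 fun χ hχ => ?_
    rcases h1 χ hχ with hat | ⟨θ, hθ, rfl⟩
    · exact Eventually.of_forall fun _ => Or.inl hat
    · have h3 := hc _ hχ
      rw [Formula.realize_not, not_not, aux_atomic F M a θ hθ] at h3
      filter_upwards [h3] with i hi
      right
      rw [Formula.realize_not, not_not]
      exact hi
  have hB : ∀ᶠ i in F, ∃ χ ∈ ψ :: l, BoundedFormula.IsAtomic χ ∧ χ.Realize fun k => a k i := by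
    filter_upwards [hE, hA] with i ⟨χ, hχ, hr⟩ hi
    exact ⟨χ, hχ, (hi χ hχ).resolve_right (not_not.2 hr), hr⟩
  obtain ⟨_, χ₀, hχ₀, hat₀, _⟩ := hB.exists
  refine hc χ₀ hχ₀ ((aux_atomic F M a χ₀ hat₀).2 ?_)
  filter_upwards [hB] with i ⟨χ, hχ, hat, hr⟩
  obtain ⟨p, rfl⟩ := List.get_of_mem hχ
  obtain ⟨q, rfl⟩ := List.get_of_mem hχ₀
  rw [h2 q p hat₀ hat]
  exact hr

end ZFHorn
end

section
/- Let Σ be a first-order signature, let 𝒦 be a class of Σ-structures, and let Δ denote the set of all basic Horn formulas φ such that every structure in 𝒦 satisfies φ. For every Σ-structure A, if A satisfies every formula in Δ, then A can be embedded into some reduced product of structures in 𝒦. -/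
/-!
Common definitions: products, reduced products, basic Horn formulas,
bundled structures, diagrams, units.
-/

namespace ZFHorn

open FirstOrder Language Structure Filter Set

universe u v w u' v' w'

variable {L : FirstOrder.Language.{v, w}}

variable (L)

section Helpers

theorem exists_rename {A : Type u} [Nonempty A] (V : Finset A) :
    ∃ (f : A → ℕ) (g : ℕ → A), ∀ a ∈ V, g (f a) = a := by
  obtain ⟨f, hf⟩ := Set.countable_iff_exists_injOn.1 V.finite_toSet.countable
  exact ⟨f, Function.invFunOn f (V : Set A), fun a ha => hf.leftInvOn_invFunOn ha⟩

theorem realize_congr_free {L : FirstOrder.Language.{u, u}} {A : Type u} [DecidableEq A]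
    {M : Type u} [L.Structure M] (φ : L.Formula A) (v w : A → M)
    (h : ∀ a ∈ BoundedFormula.freeVarFinset φ, v a = w a) : φ.Realize v ↔ φ.Realize w := by
  have h1 := BoundedFormula.realize_restrictFreeVar (φ := φ) (f := Subtype.val) (v := v)
    (xs := default) w (fun a => h a.1 a.2)
  have h2 := BoundedFormula.realize_restrictFreeVar (φ := φ) (f := Subtype.val) (v := v)
    (xs := default) v (fun a => rfl)
  exact h2.symm.trans h1

theorem realize_orList {L : FirstOrder.Language.{u, u}} {α : Type} {M : Type u} [L.Structure M]
    (ψ : L.Formula α) (l : List (L.Formula α)) (v : α → M) :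
    (orList ψ l).Realize v ↔ ∃ χ ∈ ψ :: l, χ.Realize v := by
  induction l generalizing ψ with
  | nil => simp [orList]
  | cons θ l ih => simp only [orList, Formula.realize_sup, ih, List.mem_cons]; aesop

theorem not_atomic_not {L : FirstOrder.Language.{u, u}} {α : Type} (θ : L.Formula α) :
    ¬ BoundedFormula.IsAtomic θ.not := by
  intro h
  cases h

/-- literals -/
def IsLit {L : FirstOrder.Language.{u, u}} {A : Type*} (χ : L.Formula A) : Prop :=
  BoundedFormula.IsAtomic χ ∨ ∃ θ : L.Formula A, BoundedFormula.IsAtomic θ ∧ χ = θ.not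

theorem IsLit.relabel {L : FirstOrder.Language.{u, u}} {A : Type u} {χ : L.Formula A}
    (h : IsLit χ) (f : A → ℕ) : IsLit (χ.relabel f) := by
  rcases h with h | ⟨θ, h, rfl⟩
  · exact Or.inl (h.relabel _)
  · exact Or.inr ⟨θ.relabel f, h.relabel _, rfl⟩

theorem isHornList_aux {L : FirstOrder.Language.{u, u}} (ψ : L.Formula ℕ) (hψ : IsLit ψ)
    (l : List (L.Formula ℕ)) (hl : ∀ φ ∈ l, BoundedFormula.IsAtomic φ) :
    IsHornList (ψ :: l.map Formula.not) := by
  have key : ∀ i : Fin (ψ :: l.map Formula.not).length,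
      BoundedFormula.IsAtomic ((ψ :: l.map Formula.not).get i) → i.1 = 0 := by
    rintro ⟨i, hi⟩ h
    cases i with
    | zero => rfl
    | succ i =>
      simp only [List.get_eq_getElem, List.getElem_cons_succ, List.getElem_map] at h
      exact absurd h (not_atomic_not _)
  refine ⟨?_, fun i j hi hj => Fin.ext ((key i hi).trans (key j hj).symm)⟩
  intro χ hχ
  rcases List.mem_cons.1 hχ with rfl | hχ
  · exact hψ
  · obtain ⟨θ, hθ, rfl⟩ := List.mem_map.1 hχ
    exact Or.inr ⟨θ, hl θ hθ, rfl⟩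

theorem exists_model {L : FirstOrder.Language.{u, u}}
    (K : Set (SStruct.{u} L)) (A : Type u) [L.Structure A] [Nonempty A]
    (hA : ∀ φ : L.Formula ℕ, IsBasicHorn φ →
      (∀ M ∈ K, SatAll (M : Type u) φ) → SatAll A φ)
    (l : List (L.Formula A)) (hl : ∀ φ ∈ l, BoundedFormula.IsAtomic φ ∧ φ.Realize id)
    (ψ : L.Formula A) (hψ : IsLit ψ) (hψ' : ¬ ψ.Realize id) :
    ∃ M : SStruct.{u} L, M ∈ K ∧ ∃ v : A → (M : Type u),
      (∀ φ ∈ l, φ.Realize v) ∧ ¬ ψ.Realize v := by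
  classical
  obtain ⟨f, g, hfg⟩ := exists_rename
    ((ψ :: l).toFinset.biUnion fun φ => BoundedFormula.freeVarFinset φ)
  have hc : ∀ φ ∈ ψ :: l, (φ.Realize (g ∘ f) ↔ φ.Realize (id : A → A)) := by
    intro φ hφ
    apply realize_congr_free
    intro a ha
    exact hfg a (Finset.mem_biUnion.2 ⟨φ, List.mem_toFinset.2 hφ, ha⟩)
  by_contra hcon
  push Not at hcon
  have := hA (orList (ψ.relabel f) ((l.map (Formula.relabel f)).map Formula.not))
    ⟨_, _, rfl, isHornList_aux _ (hψ.relabel f) _ (by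
      intro φ hφ
      obtain ⟨θ, hθ, rfl⟩ := List.mem_map.1 hφ
      exact (hl θ hθ).1.relabel _)⟩ ?_ g
  · obtain ⟨χ, hχ, hr⟩ := (realize_orList _ _ _).1 this
    rcases List.mem_cons.1 hχ with rfl | hχ
    · rw [Formula.realize_relabel, hc _ (by simp)] at hr
      exact hψ' hr
    · obtain ⟨_, hθ, rfl⟩ := List.mem_map.1 hχ
      obtain ⟨θ, hm, rfl⟩ := List.mem_map.1 hθ
      rw [Formula.realize_not, Formula.realize_relabel, hc _ (by simp [hm])] at hr
      exact hr (hl θ hm).2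
  · intro M hM v
    rw [realize_orList]
    by_cases h : ∀ φ ∈ l, φ.Realize (v ∘ f)
    · exact ⟨_, List.mem_cons_self, Formula.realize_relabel.2 (hcon M hM (v ∘ f) h)⟩
    · push Not at h
      obtain ⟨φ, hφ, hn⟩ := h
      refine ⟨(φ.relabel f).not, ?_, ?_⟩
      · exact List.mem_cons_of_mem _ (List.mem_map_of_mem (List.mem_map_of_mem hφ))
      · rw [Formula.realize_not, Formula.realize_relabel]
        exact hn

end Helpers

/-- Lemma 4 (Hodges 9.4.6): if `A` satisfies every basic Horn formula that holds in every
member of `K`, then `A` embeds into a reduced product of structures in `K`. -/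
theorem embedding_into_reducedProduct {L : FirstOrder.Language.{u, u}}
    (K : Set (SStruct.{u} L)) (A : Type u) [L.Structure A] [Nonempty A]
    (hA : ∀ φ : L.Formula ℕ, IsBasicHorn φ →
      (∀ M ∈ K, SatAll (M : Type u) φ) → SatAll A φ) :
    ∃ (ι : Type u) (F : Filter ι) (_ : F.NeBot) (B : ι → SStruct.{u} L),
      (∀ i, B i ∈ K) ∧ Nonempty (A ↪[L] F.Product fun i => (B i : Type u)) := by
  classical
  let P := {φ : L.Formula A // BoundedFormula.IsAtomic φ ∧ φ.Realize (id : A → A)}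
  let N := {ψ : L.Formula A // IsLit ψ ∧ ¬ ψ.Realize (id : A → A)}
  have hex : ∀ i : Finset P × N, ∃ M : SStruct.{u} L, M ∈ K ∧ ∃ v : A → (M : Type u),
      (∀ φ ∈ i.1, φ.1.Realize v) ∧ ¬ i.2.1.Realize v := by
    intro i
    obtain ⟨M, hM, v, h1, h2⟩ := exists_model K A hA (i.1.toList.map Subtype.val) (by
      intro φ hφ
      obtain ⟨θ, -, rfl⟩ := List.mem_map.1 hφ
      exact θ.2) i.2.1 i.2.2.1 i.2.2.2
    exact ⟨M, hM, v, fun φ hφ => h1 _ (List.mem_map_of_mem (Finset.mem_toList.2 hφ)), h2⟩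
  choose B hB v hv hv' using hex
  have hN : Nonempty N := by
    obtain ⟨a⟩ := ‹Nonempty A›
    refine ⟨⟨(Term.equal (Term.var a) (Term.var a)).not,
      Or.inr ⟨_, BoundedFormula.IsAtomic.equal _ _, rfl⟩, ?_⟩⟩
    simp [Formula.realize_not]
  let F : Filter (Finset P × N) := Filter.comap Prod.fst atTop
  have hF : F.NeBot := Filter.NeBot.comap_of_surj inferInstance Prod.fst_surjective
  have key : ∀ φ : L.Formula A, BoundedFormula.IsAtomic φ →
      ((∀ᶠ i in F, φ.Realize (v i)) ↔ φ.Realize (id : A → A)) := by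
    intro φ hφ
    constructor
    · intro h
      by_contra hn
      obtain ⟨T, hT⟩ := (Filter.eventually_comap.1 h).exists
      exact hv' (T, ⟨φ, Or.inl hφ, hn⟩) (hT _ rfl)
    · intro h
      refine Filter.eventually_comap.2 ((Filter.eventually_ge_atTop {⟨φ, hφ, h⟩}).mono ?_)
      rintro T hT i rfl
      exact hv i _ (hT (Finset.mem_singleton_self _))
  have keq : ∀ t s : L.Term A, (∀ᶠ i in F, t.realize (v i) = s.realize (v i)) ↔
      t.realize (id : A → A) = s.realize id := by
    intro t s
    have := key (t.equal s) (BoundedFormula.IsAtomic.equal _ _)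
    simpa only [Formula.realize_equal] using this
  refine ⟨Finset P × N, F, hF, B, hB, ⟨⟨⟨fun a => Quotient.mk _ (fun i => v i a), ?_⟩, ?_, ?_⟩⟩⟩
  · intro a b hab
    exact (keq (Term.var a) (Term.var b)).1 (Quotient.exact hab)
  · intro n f x
    refine Eq.trans (Quotient.sound ?_) (funMap_quotient_mk' _ f (fun k i => v i (x k))).symm
    exact (keq (Term.var (funMap f x)) (Term.func f fun k => Term.var (x k))).2 rfl
  · intro n r x
    refine (relMap_quotient_mk' _ r (fun k i => v i (x k))).trans ?_
    have := key (r.formula fun k => Term.var (x k)) (BoundedFormula.IsAtomic.rel _ _)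
    simp only [Formula.realize_rel] at this
    exact this

end ZFHorn
end

section
/- Let Σ be a first-order signature. A class 𝒦 of Σ-structures is a quasivariety if and only if 𝒦 contains a unit and is closed under isomorphisms, substructures, and reduced products. -/
/-!
Common definitions: products, reduced products, basic Horn formulas,
bundled structures, diagrams, units.
-/

namespace ZFHorn

open FirstOrder Language Structure Filter Set

universe u v w u' v' w'

variable {L : FirstOrder.Language.{v, w}}

variable (L)

section Helpers

variable {L : FirstOrder.Language.{v, w}}

theorem h_realize_orList {α : Type u'} {M : Type v'} [L.Structure M] (v : α → M)
    (l : List (L.Formula α)) : ∀ φ : L.Formula α,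
      (orList φ l).Realize v ↔ ∃ χ ∈ φ :: l, Formula.Realize χ v := by
  induction l with
  | nil => intro φ; simp [orList]
  | cons ψ l ih =>
    intro φ
    have := ih ψ
    simp only [orList, Formula.realize_sup, this, List.mem_cons, exists_eq_or_imp]

theorem h_not_atomic {α : Type u'} (θ : L.Formula α) :
    ¬ BoundedFormula.IsAtomic (Formula.not θ) := by
  intro h
  cases h

theorem h_atomic_embedding {α : Type u'} {M : Type v'} {N : Type w'} [L.Structure M]
    [L.Structure N] (f : M ↪[L] N) {φ : L.Formula α} (h : BoundedFormula.IsAtomic φ)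
    (v : α → M) : φ.Realize (f ∘ v) ↔ φ.Realize v := by
  have e : Sum.elim (f ∘ v) (default : Fin 0 → N) = f ∘ Sum.elim v (default : Fin 0 → M) := by
    funext j; rcases j with j | j
    · rfl
    · exact j.elim0
  cases h with
  | equal t₁ t₂ =>
    simp only [Formula.Realize, BoundedFormula.realize_bdEqual, e, HomClass.realize_term]
    exact f.injective.eq_iff
  | rel R ts =>
    simp only [Formula.Realize, BoundedFormula.realize_rel, e, HomClass.realize_term]
    exact f.map_rel R _

theorem h_qi_embedding {α : Type u'} {M : Type v'} {N : Type w'} [L.Structure M]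
    [L.Structure N] (f : M ↪[L] N) {φ : L.Formula α} (h : IsQuasiIdentity φ)
    (hN : SatAll N φ) : SatAll M φ := by
  obtain ⟨ψ, l, rfl, ⟨h1, -⟩, -⟩ := h
  intro v
  have := hN (f ∘ v)
  rw [h_realize_orList] at this ⊢
  obtain ⟨χ, hχ, hr⟩ := this
  refine ⟨χ, hχ, ?_⟩
  rcases h1 χ hχ with ha | ⟨θ, ha, rfl⟩
  · exact (h_atomic_embedding f ha v).1 hr
  · rw [Formula.realize_not] at hr ⊢
    exact fun h' => hr ((h_atomic_embedding f ha v).2 h')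

theorem h_qi_unit {α : Type u'} {M : Type v'} [L.Structure M] (hM : IsUnit L M)
    {φ : L.Formula α} (h : IsQuasiIdentity φ) : SatAll M φ := by
  obtain ⟨ψ, l, rfl, -, χ, hχ, ha⟩ := h
  intro v
  rw [h_realize_orList]
  refine ⟨χ, hχ, ?_⟩
  obtain ⟨⟨a, h1⟩, h2⟩ := hM
  cases ha with
  | equal t₁ t₂ =>
    simp only [Formula.Realize, BoundedFormula.realize_bdEqual]
    rw [h1 (Term.realize _ t₁), h1 (Term.realize _ t₂)]
  | rel R ts =>
    simp only [Formula.Realize, BoundedFormula.realize_rel]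
    exact h2 _ _ _

/-- The class of `x` in the reduced product. -/
def hmk {ι : Type u'} (F : Filter ι) {M : ι → Type v'} (x : ∀ a, M a) : F.Product M :=
  Quotient.mk (F.productSetoid M) x

theorem h_term_cast {ι : Type u'} {F : Filter ι} {M : ι → Type v'} [∀ i, L.Structure (M i)]
    {β : Type w'} (x : β → ∀ a, M a) (t : L.Term β) :
    (t.realize fun i => (hmk F (x i) : F.Product M)) =
      (hmk F (fun a => t.realize fun i => x i a) : F.Product M) := by
  refine (@Term.realize_quotient_mk' L _ (F.productSetoid M)
      (reducedProductPrestructure F M) _ t x).trans ?_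
  refine congrArg (hmk F) ?_
  funext a
  induction t with
  | var => rfl
  | func f ts ih =>
    simp only [Term.realize]
    change funMap f _ = funMap f _
    congr 1
    funext k
    exact ih k

theorem h_atomic_cast {ι : Type u'} {F : Filter ι} {M : ι → Type v'} [∀ i, L.Structure (M i)]
    {β : Type w'} (x : β → ∀ a, M a) {φ : L.Formula β} (h : BoundedFormula.IsAtomic φ) :
    (φ.Realize fun i => (hmk F (x i) : F.Product M)) ↔
      ∀ᶠ a in F, φ.Realize fun i => x i a := by
  have e : Sum.elim (fun i => (hmk F (x i) : F.Product M))
      (default : Fin 0 → F.Product M) =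
      fun j => (hmk F
        (Sum.elim x (fun k : Fin 0 => k.elim0) j) : F.Product M) := by
    funext j; rcases j with j | j
    · rfl
    · exact j.elim0
  have e2 : ∀ a, Sum.elim (fun i => x i a) (default : Fin 0 → M a) =
      fun j => Sum.elim x (fun k : Fin 0 => k.elim0) j a := by
    intro a
    funext j; rcases j with j | j
    · rfl
    · exact j.elim0
  cases h with
  | equal t₁ t₂ =>
    simp only [Formula.Realize, BoundedFormula.realize_bdEqual, e, e2, h_term_cast]
    exact Quotient.eq
  | rel R ts =>
    simp only [Formula.Realize, BoundedFormula.realize_rel, e, e2, h_term_cast]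
    exact @relMap_quotient_mk' L _ (F.productSetoid M) (reducedProductPrestructure F M) _ R _

theorem h_qi_reduced {ι : Type u'} {F : Filter ι} {M : ι → Type v'} [∀ i, L.Structure (M i)]
    {β : Type w'} {φ : L.Formula β} (h : IsQuasiIdentity φ) (hM : ∀ i, SatAll (M i) φ) :
    SatAll (F.Product M) φ := by
  obtain ⟨ψ, l, rfl, ⟨h1, h2⟩, χ₀, hχ₀, ha₀⟩ := h
  intro v
  have hv : ∃ x : β → ∀ a, M a,
      v = fun i => (hmk F (x i) : F.Product M) := by
    choose x hx using fun i => Quotient.exists_rep (s := F.productSetoid M) (v i)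
    exact ⟨x, funext fun i => (hx i).symm⟩
  obtain ⟨x, rfl⟩ := hv
  rw [h_realize_orList]
  by_contra! hcon
  have key : ∀ χ ∈ ψ :: l, ∀ᶠ a in F, χ ≠ χ₀ → ¬ χ.Realize fun i => x i a := by
    intro χ hχ
    rcases h1 χ hχ with ha | ⟨θ, ha, rfl⟩
    · have : χ = χ₀ := by
        obtain ⟨i, rfl⟩ := List.get_of_mem hχ
        obtain ⟨j, rfl⟩ := List.get_of_mem hχ₀
        rw [h2 i j ha ha₀]
      exact Eventually.of_forall fun _ h => absurd this h
    · have h3 := hcon _ hχ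
      rw [Formula.realize_not, not_not, h_atomic_cast x ha] at h3
      filter_upwards [h3] with a h3 _
      rw [Formula.realize_not, not_not]
      exact h3
  have key2 : ∀ᶠ a in F, ∀ χ ∈ ψ :: l, χ ≠ χ₀ → ¬ χ.Realize fun i => x i a :=
    (Filter.eventually_all_finite (List.finite_toSet (ψ :: l))).2 key
  refine hcon χ₀ hχ₀ ((h_atomic_cast x ha₀).2 ?_)
  filter_upwards [key2] with a h3
  have := hM a (fun i => x i a)
  rw [h_realize_orList] at this
  obtain ⟨χ, hχ, hr⟩ := this
  by_cases hc : χ = χ₀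
  · rwa [← hc]
  · exact absurd hr (h3 χ hχ hc)

theorem h_finite_dep {α : Type u'} (φ : L.Formula α) :
    ∃ T : Finset α, ∀ (M : Type v') [L.Structure M] (v v' : α → M), (∀ a ∈ T, v a = v' a) →
      (φ.Realize v ↔ φ.Realize v') := by
  classical
  refine ⟨BoundedFormula.freeVarFinset φ, fun M _ v v' h => ?_⟩
  have h1 := BoundedFormula.realize_restrictFreeVar (φ := φ) (f := fun a => a.1) (v := v)
    (xs := default) v (fun _ => rfl)
  have h2 := BoundedFormula.realize_restrictFreeVar (φ := φ) (f := fun a => a.1) (v := v)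
    (xs := default) v' (fun a => h _ a.2)
  exact h1.symm.trans h2

theorem h_hornList {α : Type u'} (ψ : L.Formula α) (hψ : BoundedFormula.IsAtomic ψ)
    (l : List (L.Formula α))
    (hl : ∀ χ ∈ l, ∃ θ : L.Formula α, BoundedFormula.IsAtomic θ ∧ χ = θ.not) :
    IsQuasiIdentity (orList ψ l) := by
  refine ⟨ψ, l, rfl, ⟨?_, ?_⟩, ψ, by simp, hψ⟩
  · intro χ hχ
    rcases List.mem_cons.1 hχ with rfl | h
    · exact Or.inl hψ
    · exact Or.inr (hl χ h)
  · have aux : ∀ i : Fin (ψ :: l).length,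
        BoundedFormula.IsAtomic ((ψ :: l).get i) → i.1 = 0 := by
      rintro ⟨i, hi⟩ h
      rcases i with _ | i
      · rfl
      · exfalso
        have hm : (ψ :: l).get ⟨i + 1, hi⟩ ∈ l := List.get_mem l ⟨i, by simpa using hi⟩
        obtain ⟨θ, -, he⟩ := hl _ hm
        rw [he] at h
        exact h_not_atomic θ h
    intro i j hi hj
    exact Fin.ext ((aux i hi).trans (aux j hj).symm)

theorem h_key (K : Set (SStruct.{u} L)) (A : SStruct.{u} L)
    (hA : ∀ φ : L.Formula ℕ, IsQuasiIdentity φ → (∀ B ∈ K, SatAll (B : Type u) φ) →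
      SatAll (A : Type u) φ)
    (s : Finset {φ : L.Formula A // BoundedFormula.IsAtomic φ ∧ φ.Realize (id : A → A)})
    (ψ : L.Formula A) (hψ : BoundedFormula.IsAtomic ψ) (hψ' : ¬ ψ.Realize (id : A → A)) :
    ∃ B ∈ K, ∃ v : A → (B : Type u), (∀ φ ∈ s, φ.1.Realize v) ∧ ¬ ψ.Realize v := by
  classical
  by_contra! hcon
  choose T hT using fun φ : L.Formula A => h_finite_dep.{_, _, _, u} φ
  let S : Finset A := T ψ ∪ s.biUnion fun φ => T φ.1
  obtain ⟨g, h, hgh⟩ : ∃ (g : A → ℕ) (h : ℕ → A), ∀ a ∈ S, h (g a) = a := by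
    obtain ⟨e⟩ : Nonempty (S ↪ ℕ) := ⟨(Finset.equivFin S).toEmbedding.trans Fin.valEmbedding⟩
    let g : A → ℕ := fun a => if ha : a ∈ S then e ⟨a, ha⟩ else 0
    have hg : Set.InjOn g (S : Set A) := by
      intro a ha b hb hab
      have ha' : a ∈ S := ha
      have hb' : b ∈ S := hb
      simp only [g, ha', hb', dif_pos] at hab
      exact congrArg Subtype.val (e.injective hab)
    exact ⟨g, Function.invFunOn g (S : Set A), fun a ha => hg.leftInvOn_invFunOn ha⟩
  have hreal : ∀ φ : L.Formula A, T φ ⊆ S →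
      ((φ.relabel g).Realize h ↔ φ.Realize (id : A → A)) := by
    intro φ hφ
    rw [Formula.realize_relabel]
    exact hT φ A _ _ fun a ha => hgh a (hφ ha)
  let l : List (L.Formula ℕ) := s.toList.map fun φ => (φ.1.relabel g).not
  have hq : IsQuasiIdentity (orList (ψ.relabel g) l) := by
    refine h_hornList _ (hψ.relabel _) _ ?_
    intro χ hχ
    obtain ⟨φ, -, rfl⟩ := List.mem_map.1 hχ
    exact ⟨_, φ.2.1.relabel _, rfl⟩
  have := hA _ hq ?_ h
  · rw [h_realize_orList] at this
    obtain ⟨χ, hχ, hr⟩ := this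
    rcases List.mem_cons.1 hχ with rfl | hχ
    · exact hψ' ((hreal ψ Finset.subset_union_left).1 hr)
    · obtain ⟨φ, hφ, rfl⟩ := List.mem_map.1 hχ
      rw [Formula.realize_not] at hr
      refine hr ((hreal φ.1 ?_).2 φ.2.2)
      refine subset_trans ?_ Finset.subset_union_right
      exact Finset.subset_biUnion_of_mem (fun φ => T φ.1) (Finset.mem_toList.1 hφ)
  · intro B hB v
    rw [h_realize_orList]
    by_cases hall : ∀ φ ∈ s, φ.1.Realize (v ∘ g)
    · exact ⟨_, List.mem_cons_self, Formula.realize_relabel.2 (hcon B hB _ hall)⟩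
    · push Not at hall
      obtain ⟨φ, hφ, hn⟩ := hall
      refine ⟨(φ.1.relabel g).not, List.mem_cons_of_mem _
        (List.mem_map.2 ⟨φ, Finset.mem_toList.2 hφ, rfl⟩), ?_⟩
      rw [Formula.realize_not, Formula.realize_relabel]
      exact hn

theorem h_embed {A : Type u'} {N : Type v'} [L.Structure A] [L.Structure N] (f : A → N)
    (hf : ∀ φ : L.Formula A, BoundedFormula.IsAtomic φ →
      (φ.Realize f ↔ φ.Realize (id : A → A))) : Nonempty (A ↪[L] N) := by
  refine ⟨⟨⟨f, ?_⟩, ?_, ?_⟩⟩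
  · intro a b hab
    have := (hf (Term.equal (var a) (var b)) (BoundedFormula.IsAtomic.equal _ _)).1
      (by simpa [Formula.realize_equal] using hab)
    simpa [Formula.realize_equal] using this
  · intro n F x
    have := (hf (Term.equal (func F fun i => var (x i)) (var (funMap F x)))
      (BoundedFormula.IsAtomic.equal _ _)).2 (by simp [Formula.realize_equal])
    simp only [Formula.realize_equal, Term.realize_func, Term.realize_var] at this
    exact this.symm
  · intro n R x
    have := hf (R.formula fun i => var (x i)) (BoundedFormula.IsAtomic.rel _ _)
    simp only [Formula.realize_rel, Term.realize_var] at this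
    exact this

end Helpers

/-- Mal'cev's theorem on quasivarieties: a class of structures is a quasivariety
(axiomatized by a set of quasi-identities) iff it contains a unit and is closed under
isomorphisms, substructures, and reduced products. -/
theorem quasivariety_iff {L : FirstOrder.Language.{u, u}}
    (K : Set (SStruct.{u} L)) :
    (∃ Γ : Set (L.Formula ℕ), (∀ φ ∈ Γ, IsQuasiIdentity φ) ∧ AxiomatizedBy L K Γ) ↔
      ((∃ M ∈ K, IsUnit L (M : Type u)) ∧ ClosedUnderIso L K ∧
        ClosedUnderSubstructures L K ∧ ClosedUnderReducedProducts L K) := by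
  constructor
  · rintro ⟨Γ, hΓ, hK⟩
    refine ⟨?_, ?_, ?_, ?_⟩
    · let str : L.Structure PUnit.{u+1} :=
        { funMap := fun _ _ => PUnit.unit, RelMap := fun _ _ => True }
      have hU : @IsUnit L PUnit.{u+1} str := ⟨⟨PUnit.unit, fun _ => rfl⟩, fun _ _ _ => trivial⟩
      exact ⟨⟨PUnit.{u+1}, str, ⟨PUnit.unit⟩⟩,
        (hK _).2 fun φ hφ => @h_qi_unit L _ _ str hU _ (hΓ φ hφ), hU⟩
    · rintro M hM N ⟨e⟩
      exact (hK _).2 fun φ hφ =>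
        h_qi_embedding e.symm.toEmbedding (hΓ φ hφ) ((hK M).1 hM φ hφ)
    · intro M hM S h
      exact (hK _).2 fun φ hφ => h_qi_embedding S.subtype (hΓ φ hφ) ((hK M).1 hM φ hφ)
    · intro ι F _ B hB
      exact (hK _).2 fun φ hφ => h_qi_reduced (hΓ φ hφ) fun i => (hK _).1 (hB i) φ hφ
  · rintro ⟨⟨U, hU, hUu⟩, hI, hS, hR⟩
    have hIS : ∀ A N : SStruct.{u} L, N ∈ K → Nonempty ((A : Type u) ↪[L] (N : Type u)) →
        A ∈ K := by
      rintro A N hN ⟨f⟩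
      have hne : Nonempty f.toHom.range := f.equivRange.toEquiv.nonempty_congr.1 A.nonempty
      exact hI _ (hS N hN f.toHom.range hne) A ⟨f.equivRange.symm⟩
    refine ⟨{φ | IsQuasiIdentity φ ∧ ∀ B ∈ K, SatAll (B : Type u) φ}, fun φ h => h.1,
      fun A => ⟨fun hA φ hφ => hφ.2 A hA, fun hA => ?_⟩⟩
    have hk := h_key K A fun φ h1 h2 => hA φ ⟨h1, h2⟩
    let P := {φ : L.Formula A // BoundedFormula.IsAtomic φ ∧ φ.Realize (id : A → A)}
    let Q := {φ : L.Formula A // BoundedFormula.IsAtomic φ ∧ ¬ φ.Realize (id : A → A)}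
    by_cases hQ : Nonempty Q
    · choose B hB v hv hv' using fun i : Finset P × Q => hk i.1 i.2.1 i.2.2.1 i.2.2.2
      let F : Filter (Finset P × Q) := (atTop : Filter (Finset P)) ×ˢ (⊤ : Filter Q)
      have hF : F.NeBot := inferInstance
      refine hIS A _ (hR (Finset P × Q) F hF B hB) ?_
      refine h_embed (fun a => (hmk F
        (fun i => v i a) : F.Product fun i => (B i : Type u))) ?_
      intro φ hφ
      refine (h_atomic_cast (fun a i => v i a) hφ).trans ⟨fun h => ?_, fun h => ?_⟩
      · by_contra hn
        obtain ⟨p, hp, q, hq, hpq⟩ := Filter.eventually_prod_iff.1 h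
        obtain ⟨s, hs⟩ := hp.exists
        have hq' : q ⟨φ, hφ, hn⟩ := by
          rw [Filter.eventually_top] at hq
          exact hq _
        exact hv' (s, ⟨φ, hφ, hn⟩) (hpq hs hq')
      · have h1 : ∀ᶠ s : Finset P in atTop, (⟨φ, hφ, h⟩ : P) ∈ s := by
          filter_upwards [Filter.eventually_ge_atTop {(⟨φ, hφ, h⟩ : P)}] with s hs
          exact hs (Finset.mem_singleton_self _)
        have h2 : ∀ᶠ i in F, (⟨φ, hφ, h⟩ : P) ∈ i.1 := h1.prod_inl _
        filter_upwards [h2] with i hi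
        exact hv i _ hi
    · refine hIS A U hU ?_
      obtain ⟨⟨a, h1⟩, h2⟩ := hUu
      refine h_embed (fun _ => a) fun φ hφ => ?_
      have hr : φ.Realize (id : A → A) := by
        by_contra hn
        exact hQ ⟨⟨φ, hφ, hn⟩⟩
      refine iff_of_true ?_ hr
      have := h_qi_unit ⟨⟨a, h1⟩, h2⟩ (h_hornList φ hφ [] (by simp)) (fun _ => a)
      exact this

end ZFHorn
end

section
/- Let Σ be a first-order signature, let 𝒦 be a class of Σ-structures, and let Δ denote the set of all atomic formulas φ such that every structure in 𝒦 satisfies φ. For every Σ-structure A, if A satisfies every formula in Δ, then A is a homomorphic image of a substructure of a product of structures in 𝒦. -/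
/-!
Common definitions: products, reduced products, basic Horn formulas,
bundled structures, diagrams, units.
-/

namespace ZFHorn

open FirstOrder Language Structure Filter Set

universe u v w u' v' w'

variable {L : FirstOrder.Language.{v, w}}

variable (L)

theorem term_congr_aux {L : FirstOrder.Language.{u, u}} {A M : Type u} [L.Structure M]
    [DecidableEq A] (v w : A → M) (t : L.Term A) (h : ∀ a ∈ t.varFinset, v a = w a) :
    t.realize v = t.realize w := by
  induction t with
  | var a => exact h a (by simp [Term.varFinset])
  | func f ts ih =>
    simp only [Term.realize_func]
    congr 1
    funext i
    refine ih i fun a ha => h a ?_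
    simp only [Term.varFinset, Finset.mem_biUnion, Finset.mem_univ, true_and]
    exact ⟨i, ha⟩

theorem rename_aux {A : Type u} [Nonempty A] (C : Finset A) :
    ∃ (e : A → ℕ) (d : ℕ → A), ∀ a ∈ C, d (e a) = a := by
  obtain ⟨e, he⟩ := Set.countable_iff_exists_injOn.1 C.countable_toSet
  exact ⟨e, Function.invFunOn e C, fun a ha => he.leftInvOn_invFunOn ha⟩

theorem eq_aux {L : FirstOrder.Language.{u, u}}
    (K : Set (SStruct.{u} L)) (A : Type u) [L.Structure A] [Nonempty A]
    (hA : ∀ φ : L.Formula ℕ, BoundedFormula.IsAtomic φ →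
      (∀ M ∈ K, SatAll (M : Type u) φ) → SatAll A φ) (t s : L.Term A)
    (h : ∀ M ∈ K, ∀ v : A → (M : Type u), t.realize v = s.realize v) :
    t.realize (id : A → A) = s.realize id := by
  classical
  obtain ⟨e, d, hed⟩ := rename_aux (t.varFinset ∪ s.varFinset)
  have := hA ((t.relabel e).equal (s.relabel e)) (BoundedFormula.IsAtomic.equal _ _)
    (fun M hM v => by
      rw [Formula.realize_equal, Term.realize_relabel, Term.realize_relabel]
      exact h M hM _) d
  rw [Formula.realize_equal, Term.realize_relabel, Term.realize_relabel] at this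
  rw [term_congr_aux id (d ∘ e) t fun a ha => (hed a (by simp [ha])).symm,
    term_congr_aux id (d ∘ e) s fun a ha => (hed a (by simp [ha])).symm]
  exact this

theorem rel_aux {L : FirstOrder.Language.{u, u}}
    (K : Set (SStruct.{u} L)) (A : Type u) [L.Structure A] [Nonempty A]
    (hA : ∀ φ : L.Formula ℕ, BoundedFormula.IsAtomic φ →
      (∀ M ∈ K, SatAll (M : Type u) φ) → SatAll A φ) {n : ℕ} (r : L.Relations n)
    (ts : Fin n → L.Term A)
    (h : ∀ M ∈ K, ∀ v : A → (M : Type u), RelMap r fun i => (ts i).realize v) :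
    RelMap r fun i => (ts i).realize (id : A → A) := by
  classical
  obtain ⟨e, d, hed⟩ := rename_aux (Finset.univ.biUnion fun i => (ts i).varFinset)
  have := hA (r.formula fun i => (ts i).relabel e) (BoundedFormula.IsAtomic.rel _ _)
    (fun M hM v => by
      rw [Formula.realize_rel]
      simp only [Term.realize_relabel]
      exact h M hM _) d
  rw [Formula.realize_rel] at this
  simp only [Term.realize_relabel] at this
  have h2 : ∀ i, (ts i).realize (id : A → A) = (ts i).realize (d ∘ e) := fun i =>
    term_congr_aux id (d ∘ e) (ts i) fun a ha =>
      (hed a (by simp only [Finset.mem_biUnion, Finset.mem_univ, true_and]; exact ⟨i, ha⟩)).symm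
  simp only [h2]
  exact this

theorem pi_realize_aux {L : FirstOrder.Language.{u, u}} {ι A : Type u} (M : ι → Type u)
    [∀ i, L.Structure (M i)] (g : A → ∀ i, M i) (t : L.Term A) (i : ι) :
    t.realize g i = t.realize fun a => g a i := by
  induction t with
  | var a => rfl
  | func f ts ih =>
    simp only [Term.realize_func]
    change funMap f (fun k => (ts k).realize g i) = _
    simp only [ih]

/-- Lemma 6: if `A` satisfies every atomic formula (identity) that holds in every member
of `K`, then `A` is a homomorphic image of a substructure of a product of structures
in `K`. -/
theorem homImage_substructure_product {L : FirstOrder.Language.{u, u}}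
    (K : Set (SStruct.{u} L)) (A : Type u) [L.Structure A] [Nonempty A]
    (hA : ∀ φ : L.Formula ℕ, BoundedFormula.IsAtomic φ →
      (∀ M ∈ K, SatAll (M : Type u) φ) → SatAll A φ) :
    ∃ (ι : Type u) (B : ι → SStruct.{u} L), (∀ i, B i ∈ K) ∧
      ∃ (S : L.Substructure (∀ i, (B i : Type u))) (f : S →[L] A),
        Function.Surjective f := by
  classical
  let I : Type u := {φ : L.Formula A // ∃ M ∈ K, ∃ v : A → (M : Type u), ¬ φ.Realize v}
  let B : I → SStruct.{u} L := fun i => i.2.choose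
  have hB : ∀ i, B i ∈ K := fun i => i.2.choose_spec.1
  let v : ∀ i : I, A → (B i : Type u) := fun i => i.2.choose_spec.2.choose
  have hv : ∀ i : I, ¬ i.1.Realize (v i) := fun i => i.2.choose_spec.2.choose_spec
  have key : ∀ φ : L.Formula A, (∀ i : I, φ.Realize (v i)) →
      ∀ M ∈ K, ∀ w : A → (M : Type u), φ.Realize w := by
    intro φ hφ M hM w
    by_contra hc
    exact hv ⟨φ, M, hM, w, hc⟩ (hφ _)
  let g : A → ∀ i, (B i : Type u) := fun a i => v i a
  have heq : ∀ t s : L.Term A, t.realize g = s.realize g →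
      t.realize (id : A → A) = s.realize id := by
    intro t s hts
    refine eq_aux K A hA t s fun M hM w => ?_
    refine Formula.realize_equal.1 (key (t.equal s) (fun i => ?_) M hM w)
    rw [Formula.realize_equal]
    have := congrFun hts i
    rwa [pi_realize_aux, pi_realize_aux] at this
  let S : L.Substructure (∀ i, (B i : Type u)) :=
    { carrier := {x | ∃ t : L.Term A, t.realize g = x}
      fun_mem := by
        intro n f xs hxs
        choose ts hts using hxs
        refine ⟨Term.func f ts, ?_⟩
        simp only [Term.realize_func]
        congr 1
        funext k
        exact hts k }
  let T : S → L.Term A := fun x => x.2.choose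
  have hT : ∀ x : S, (T x).realize g = x.1 := fun x => x.2.choose_spec
  refine ⟨I, B, hB, S, ⟨fun x => (T x).realize id, ?_, ?_⟩, ?_⟩
  · intro n f xs
    refine heq _ (Term.func f fun k => T (xs k)) ?_
    rw [hT, Term.realize_func]
    simp only [hT]
    rfl
  · intro n r xs hr
    refine rel_aux K A hA r (fun k => T (xs k)) fun M hM w => ?_
    refine Formula.realize_rel.1 (key (r.formula fun k => T (xs k)) (fun i => ?_) M hM w)
    rw [Formula.realize_rel]
    have h1 : RelMap r fun k => (xs k).1 i := hr i
    have h2 : ∀ k, (T (xs k)).realize (v i) = (xs k).1 i := fun k => by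
      rw [← hT (xs k), pi_realize_aux]
    simp only [h2]
    exact h1
  · intro a
    refine ⟨⟨g a, Term.var a, rfl⟩, ?_⟩
    exact heq _ (Term.var a) (hT _)

end ZFHorn
end

section
/- Let Σ be a first-order signature, let 𝒦 be a class of Σ-structures, let Δ denote the set of all atomic formulas φ such that every structure in 𝒦 satisfies φ, and let A be a Σ-structure satisfying every formula in Δ. Let 𝒦′ be the class of all Σ(A)-structures B with B|_Σ ∈ 𝒦. Then every sentence in diag⁻(A) has a model in 𝒦′; that is, for every ¬ξ ∈ diag⁻(A) there exists B ∈ 𝒦′ with B ⊨ ¬ξ. -/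
/-!
Common definitions: products, reduced products, basic Horn formulas,
bundled structures, diagrams, units.
-/

namespace ZFHorn

open FirstOrder Language Structure Filter Set

universe u v w u' v' w'

variable {L : FirstOrder.Language.{v, w}}

variable (L)

/-- Atomicity is preserved by restricting free variables. -/
theorem isAtomic_restrictFreeVar {L : FirstOrder.Language.{u, u}} {α : Type u'} {β : Type v'}
    [DecidableEq α] {n : ℕ} {φ : L.BoundedFormula α n} (h : φ.IsAtomic)
    (f : φ.freeVarFinset → β) : (φ.restrictFreeVar f).IsAtomic := by
  cases h with
  | equal t₁ t₂ => exact BoundedFormula.IsAtomic.equal _ _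
  | rel R ts => exact BoundedFormula.IsAtomic.rel _ _

/-- Atomicity is preserved by turning constants into variables. -/
theorem isAtomic_equivSentence_symm {L : FirstOrder.Language.{u, u}} {A : Type u}
    {ψ : (L[[A]]).Sentence} (h : BoundedFormula.IsAtomic ψ) :
    BoundedFormula.IsAtomic (Formula.equivSentence.symm ψ) := by
  cases h with
  | equal t₁ t₂ => exact BoundedFormula.IsAtomic.equal _ _
  | rel R ts => exact BoundedFormula.IsAtomic.rel _ _

/-- The claim in the proof of Lemma 6: if `A` satisfies every atomic formula valid in `K`,
then every sentence of `diag⁻(A)` has a model among the `Σ(A)`-structures whose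
`Σ`-reduct lies in `K`. -/
theorem diagMinus_sentence_model {L : FirstOrder.Language.{u, u}}
    (K : Set (SStruct.{u} L)) (A : Type u) [L.Structure A] [Nonempty A]
    (hA : ∀ φ : L.Formula ℕ, BoundedFormula.IsAtomic φ →
      (∀ M ∈ K, SatAll (M : Type u) φ) → SatAll A φ)
    (φ : (L[[A]]).Sentence) (hφ : φ ∈ DiagMinus L A) :
    ∃ B : SStruct.{u} (L[[A]]),
      (haveI : L.Structure (B : Type u) := (L.lhomWithConstants A).reduct (B : Type u);
        (SStruct.of (B : Type u) : SStruct.{u} L) ∈ K) ∧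
      (B : Type u) ⊨ φ := by
  classical
  obtain ⟨ψ, hat, rfl, hneg⟩ := hφ
  have hneg' : ¬ (Formula.equivSentence.symm ψ).Realize (fun a => (L.con a : A)) := by
    rw [Formula.realize_equivSentence_symm_con A ψ]
    exact (Sentence.realize_not A).1 hneg
  have hχ := isAtomic_equivSentence_symm hat
  generalize hχdef : Formula.equivSentence.symm ψ = χ at hneg' hχ
  let e := χ.freeVarFinset.equivFin
  let f : χ.freeVarFinset → ℕ := fun a => e a
  have hf : Function.Injective f := fun a b h => e.injective (Fin.ext h)
  have key : ∃ M ∈ K, ¬ SatAll (M : Type u) (χ.restrictFreeVar f : L.Formula ℕ) := by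
    by_contra hcon
    push Not at hcon
    have h1 := hA _ (isAtomic_restrictFreeVar hχ f) hcon
    let v : ℕ → A := Function.extend f (fun a => (L.con (a : A) : A))
      (fun _ => Classical.arbitrary A)
    have hv : ∀ a, v (f a) = (fun a => (L.con a : A)) (a : A) :=
      fun a => hf.extend_apply _ _ a
    exact hneg' ((BoundedFormula.realize_restrictFreeVar _ hv).1 (h1 v))
  obtain ⟨M, hMK, hM⟩ := key
  unfold SatAll at hM
  push Not at hM
  obtain ⟨v, hv⟩ := hM
  let w : A → M := fun a => if h : a ∈ χ.freeVarFinset then v (f ⟨a, h⟩)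
    else Classical.arbitrary _
  have hw : ¬ χ.Realize w := fun h => hv
    ((BoundedFormula.realize_restrictFreeVar w (fun a => by simp [w])).2 h)
  rw [← hχdef, Formula.realize_equivSentence_symm] at hw
  letI := constantsOn.structure w
  refine ⟨⟨M, inferInstance, inferInstance⟩, ?_, ?_⟩
  · exact hMK
  · exact (Sentence.realize_not M).2 hw

end ZFHorn
end

section
/- Let Σ be a first-order signature. A class 𝒦 of Σ-structures is a variety if and only if 𝒦 is closed under homomorphic images, substructures, and products. (When Σ contains no relation symbols, this is Birkhoff's HSP theorem.) -/
/-!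
Common definitions: products, reduced products, basic Horn formulas,
bundled structures, diagrams, units.
-/

namespace ZFHorn

open FirstOrder Language Structure Filter Set

universe u v w u' v' w'

variable {L : FirstOrder.Language.{v, w}}

variable (L)

theorem atomic_cases {L : FirstOrder.Language.{u, u}} {α : Type u'} {φ : L.Formula α}
    (h : BoundedFormula.IsAtomic φ) :
    (∃ t₁ t₂ : L.Term α, ∀ (M : Type u) [L.Structure M] (v : α → M),
      φ.Realize v ↔ t₁.realize v = t₂.realize v) ∨
    (∃ (n : ℕ) (r : L.Relations n) (ts : Fin n → L.Term α),
      ∀ (M : Type u) [L.Structure M] (v : α → M),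
      φ.Realize v ↔ RelMap r fun i => (ts i).realize v) := by
  have key : ∀ (t : L.Term (α ⊕ Fin 0)) (M : Type u) [L.Structure M] (v : α → M),
      (t.relabel (Sum.elim id Fin.elim0)).realize v = t.realize (Sum.elim v default) := by
    intro t M _ v
    rw [Term.realize_relabel]
    congr 1
    funext x
    rcases x with x | x
    · rfl
    · exact x.elim0
  cases h with
  | equal t₁ t₂ =>
    left
    refine ⟨t₁.relabel (Sum.elim id Fin.elim0), t₂.relabel (Sum.elim id Fin.elim0), ?_⟩
    intro M _ v
    rw [key, key]
    exact BoundedFormula.realize_bdEqual t₁ t₂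
  | rel R ts =>
    right
    refine ⟨_, R, fun i => (ts i).relabel (Sum.elim id Fin.elim0), ?_⟩
    intro M _ v
    simp only [key]
    exact BoundedFormula.realize_rel

theorem atomic_hom {L : FirstOrder.Language.{u, u}} {α : Type u'} {φ : L.Formula α}
    (h : BoundedFormula.IsAtomic φ) {M N : Type u} [L.Structure M] [L.Structure N]
    (f : M →[L] N) (v : α → M) (hv : φ.Realize v) : φ.Realize (f ∘ v) := by
  rcases atomic_cases h with ⟨t₁, t₂, H⟩ | ⟨n, r, ts, H⟩
  · rw [H] at hv ⊢
    rw [HomClass.realize_term, HomClass.realize_term, hv]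
  · rw [H] at hv ⊢
    simp only [HomClass.realize_term]
    exact f.map_rel r _ hv

theorem atomic_emb {L : FirstOrder.Language.{u, u}} {α : Type u'} {φ : L.Formula α}
    (h : BoundedFormula.IsAtomic φ) {M N : Type u} [L.Structure M] [L.Structure N]
    (f : M ↪[L] N) (v : α → M) (hv : φ.Realize (f ∘ v)) : φ.Realize v := by
  rcases atomic_cases h with ⟨t₁, t₂, H⟩ | ⟨n, r, ts, H⟩
  · rw [H] at hv ⊢
    rw [HomClass.realize_term, HomClass.realize_term] at hv
    exact f.injective hv
  · rw [H] at hv ⊢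
    simp only [HomClass.realize_term] at hv
    exact (f.map_rel r _).1 hv

theorem realize_term_pi {L : FirstOrder.Language.{u, u}} {α : Type u'} {ι : Type u}
    (B : ι → Type u) [∀ i, L.Structure (B i)] (t : L.Term α) (v : α → ∀ i, B i) (i : ι) :
    t.realize v i = t.realize (fun a => v a i) := by
  induction t with
  | var a => rfl
  | func f ts ih =>
    change funMap f (fun k => (ts k).realize v i) = funMap f _
    simp only [ih]

theorem atomic_pi {L : FirstOrder.Language.{u, u}} {α : Type u'} {φ : L.Formula α}
    (h : BoundedFormula.IsAtomic φ) {ι : Type u}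
    (B : ι → Type u) [∀ i, L.Structure (B i)] (v : α → ∀ i, B i) :
    φ.Realize v ↔ ∀ i, φ.Realize (fun a => v a i) := by
  rcases atomic_cases h with ⟨t₁, t₂, H⟩ | ⟨n, r, ts, H⟩
  · simp only [H, funext_iff, realize_term_pi]
  · simp only [H]
    change (∀ i, RelMap r (fun k => (ts k).realize v i)) ↔ _
    simp only [realize_term_pi]

open Classical in
theorem atomic_transfer {L : FirstOrder.Language.{u, u}} (K : Set (SStruct.{u} L))
    (A : SStruct.{u} L)
    (hA : ∀ φ : L.Formula ℕ, BoundedFormula.IsAtomic φ → (∀ M ∈ K, SatAll (M : Type u) φ) →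
      SatAll (A : Type u) φ)
    {α : Type u} (φ : L.Formula α) (h : BoundedFormula.IsAtomic φ)
    (hK : ∀ M ∈ K, SatAll (M : Type u) φ) : SatAll (A : Type u) φ := by
  intro v
  obtain ⟨e, he⟩ := exists_injective_nat φ.freeVarFinset
  have hat : BoundedFormula.IsAtomic (φ.restrictFreeVar e) := by
    cases h with
    | equal t₁ t₂ => exact BoundedFormula.IsAtomic.equal _ _
    | rel R ts => exact BoundedFormula.IsAtomic.rel _ _
  have h1 := hA (φ.restrictFreeVar e) hat (by
    intro M hM w
    let w' : α → M := fun a => if ha : a ∈ φ.freeVarFinset then w (e ⟨a, ha⟩)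
      else Classical.arbitrary _
    refine (BoundedFormula.realize_restrictFreeVar w' ?_).2 (hK M hM w')
    rintro ⟨a, ha⟩
    simp [w', ha])
  refine (BoundedFormula.realize_restrictFreeVar v ?_).1
    (h1 (Function.extend e (fun a => v a) (fun _ => Classical.arbitrary _)))
  intro a
  exact he.extend_apply _ _ _

/-- Birkhoff's HSP theorem for first-order structures: a class of structures is a variety
(axiomatized by a set of identities, i.e. atomic formulas) iff it is closed under
homomorphic images, substructures, and products. -/
theorem variety_iff_HSP {L : FirstOrder.Language.{u, u}}
    (K : Set (SStruct.{u} L)) :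
    (∃ Γ : Set (L.Formula ℕ), (∀ φ ∈ Γ, BoundedFormula.IsAtomic φ) ∧
        AxiomatizedBy L K Γ) ↔
      (ClosedUnderHomImages L K ∧ ClosedUnderSubstructures L K ∧
        ClosedUnderProducts L K) := by
  constructor
  · rintro ⟨Γ, hat, hK⟩
    refine ⟨?_, ?_, ?_⟩
    · intro M hM N f hf
      rw [hK] at hM ⊢
      intro φ hφ v
      have := atomic_hom (hat φ hφ) f (fun n => Function.surjInv hf (v n)) (hM φ hφ _)
      convert this using 1
      funext n
      exact (Function.surjInv_eq hf _).symm
    · intro M hM S h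
      rw [hK] at hM ⊢
      intro φ hφ v
      exact atomic_emb (hat φ hφ) S.subtype v (hM φ hφ _)
    · intro ι B hB
      rw [hK]
      intro φ hφ v
      exact (atomic_pi (hat φ hφ) (fun i => (B i : Type u)) v).2
        fun i => (hK _).1 (hB i) φ hφ _
  · rintro ⟨hH, hS, hP⟩
    refine ⟨{φ | BoundedFormula.IsAtomic φ ∧ ∀ M ∈ K, SatAll (M : Type u) φ},
      fun φ hφ => hφ.1, fun A => ⟨fun hA φ hφ => hφ.2 A hA, fun hA => ?_⟩⟩
    have tr := fun (φ : L.Formula (A : Type u)) => atomic_transfer K A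
      (fun φ h1 h2 => hA φ ⟨h1, h2⟩) φ
    let ι : Type u := {φ : L.Formula (A : Type u) //
      ∃ M ∈ K, ∃ v : A.carrier → (M : Type u), ¬ φ.Realize v}
    have hι : ∀ i : ι, ∃ M ∈ K, ∃ v : A.carrier → (M : Type u), ¬ i.1.Realize v :=
      fun i => i.2
    choose B hB v hv using hι
    have hPK := hP ι B hB
    let g : A.carrier → ∀ i, (B i : Type u) := fun a i => v i a
    have main : ∀ φ : L.Formula (A : Type u), BoundedFormula.IsAtomic φ →
        φ.Realize g → φ.Realize (id : A.carrier → (A : Type u)) := by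
      intro φ hφ hg
      refine tr φ hφ ?_ id
      by_contra hcon
      simp only [SatAll, not_forall] at hcon
      obtain ⟨M, hM, w, hw⟩ := hcon
      let i : ι := ⟨φ, M, hM, w, hw⟩
      exact hv i ((atomic_pi hφ (fun i => (B i : Type u)) g).1 hg i)
    have hcl : ∀ {n : ℕ} (f : L.Functions n), ClosedUnder f
        (Set.range fun t : L.Term (A : Type u) => t.realize g) := by
      intro n f x hx
      choose ts hts using hx
      refine ⟨Term.func f ts, ?_⟩
      change funMap f (fun k => (ts k).realize g) = _
      congr 1
      funext k
      exact hts k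
    let S : L.Substructure (∀ i, (B i : Type u)) :=
      ⟨Set.range fun t : L.Term (A : Type u) => t.realize g, hcl⟩
    have hne : Nonempty S := ⟨⟨_, ⟨Term.var (Classical.arbitrary _), rfl⟩⟩⟩
    have hSK := hS _ hPK S hne
    have hc : ∀ s : S, ∃ t : L.Term (A : Type u), t.realize g = s.1 := fun s => s.2
    choose τ hτ using hc
    have heq : ∀ t₁ t₂ : L.Term (A : Type u), t₁.realize g = t₂.realize g →
        t₁.realize (id : A.carrier → (A : Type u)) = t₂.realize id := by
      intro t₁ t₂ h
      have := main (t₁.equal t₂) (BoundedFormula.IsAtomic.equal _ _)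
        (Formula.realize_equal.2 h)
      exact Formula.realize_equal.1 this
    let F : S →[L] (A : Type u) :=
      { toFun := fun s => (τ s).realize id
        map_fun' := by
          intro n f x
          refine heq _ (Term.func f fun k => τ (x k)) ?_
          rw [hτ]
          change _ = funMap f (fun k => (τ (x k)).realize g)
          simp only [hτ]
          rfl
        map_rel' := by
          intro n r x hx
          have := main (r.formula fun k => τ (x k)) (BoundedFormula.IsAtomic.rel _ _)
            (Formula.realize_rel.2 (by
              simp only [hτ]
              exact hx))
          exact Formula.realize_rel.1 this }
    refine hH _ hSK A F ?_
    intro a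
    refine ⟨⟨g a, ⟨Term.var a, rfl⟩⟩, ?_⟩
    exact heq _ (Term.var a) (hτ _)

end ZFHorn
end
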